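/- arXiv:2512.05838 — 5 statements merged into one kernel-verified Lean document; each statement's English description precedes it below -/
import Mathlib

section
/- Let H : ℝᵈ → ℝ be of class C² and let σ : ℝᵈ → ℝ^{d×k} have C¹ entries, with columns σʲ : ℝᵈ → ℝᵈ for j = 1,…,k. Assume that for all x ∈ ℝᵈ and all j we have ⟨∇H(x), σʲ(x)⟩ = 0. Then for all x ∈ ℝᵈ: tr(σ(x) σ(x)ᵀ D²H(x)) = − ⟨∇H(x), Σ_{j=1}^k (Dσʲ)(x) · σʲ(x)⟩, where D²H(x) is the Hessian matrix of H at x and (Dσʲ)(x) ∈ ℝ^{d×d} is the Jacobian matrix of σʲ at x. -/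
open Matrix

/-- The gradient of `H : ℝᵈ → ℝ` at `x`, as a vector of partial derivatives. -/
noncomputable def gradVec {d : ℕ} (H : (Fin d → ℝ) → ℝ) (x : Fin d → ℝ) : Fin d → ℝ :=
  fun i => fderiv ℝ H x (Pi.single i 1)

/-- The Hessian matrix of `H : ℝᵈ → ℝ` at `x`. -/
noncomputable def hessMat {d : ℕ} (H : (Fin d → ℝ) → ℝ) (x : Fin d → ℝ) :
    Matrix (Fin d) (Fin d) ℝ :=
  fun i j => fderiv ℝ (fun y => fderiv ℝ H y (Pi.single j 1)) x (Pi.single i 1)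

/-- The Jacobian matrix of a map `g : ℝᵈ → ℝᵈ` at `x`. -/
noncomputable def jacMat {d : ℕ} (g : (Fin d → ℝ) → (Fin d → ℝ)) (x : Fin d → ℝ) :
    Matrix (Fin d) (Fin d) ℝ :=
  fun i l => fderiv ℝ (fun y => g y i) x (Pi.single l 1)

/-!
Differentiating the identity `⟨∇H, v⟩ = 0`, which holds near `x`, gives `D²H v = -(Dv)ᵀ ∇H` at `x`.
Pairing this with `v(x)` itself, taking for `v` each column of `σ`, and summing yields the claim,
since `tr(σ σᵀ D²H) = ∑ⱼ ⟨σʲ, D²H σʲ⟩`.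
-/

open scoped Topology

theorem trace_mul_mul_eq_sum_dotProduct_mulVec {l m n R : Type*} [Fintype l] [Fintype m]
    [Fintype n] [NonUnitalCommSemiring R]
    (A : Matrix l m R) (B : Matrix m n R) (C : Matrix n l R) :
    trace (A * B * C) = ∑ j, B.row j ⬝ᵥ C *ᵥ A.col j := by
  rw [Matrix.mul_assoc, trace_mul_comm, Matrix.mul_assoc]
  rfl

section Derivatives

variable {d : ℕ} {H : (Fin d → ℝ) → ℝ} {G v : (Fin d → ℝ) → (Fin d → ℝ)} {x : Fin d → ℝ}

theorem hessMat_eq_transpose_jacMat_gradVec (H : (Fin d → ℝ) → ℝ) (x : Fin d → ℝ) :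
    hessMat H x = (jacMat (gradVec H) x)ᵀ :=
  rfl

theorem gradVec_eq_zero_of_eventuallyEq_const {c : ℝ} (hH : H =ᶠ[𝓝 x] fun _ => c) :
    gradVec H x = 0 := by
  ext i
  simp [gradVec, hH.fderiv_eq]

theorem gradVec_dotProduct (hG : DifferentiableAt ℝ G x) (hv : DifferentiableAt ℝ v x) :
    gradVec (fun y => G y ⬝ᵥ v y) x = G x ᵥ* jacMat v x + v x ᵥ* jacMat G x := by
  have hderiv : HasFDerivAt (fun y => G y ⬝ᵥ v y)
      (∑ i, (G x i • fderiv ℝ (fun y => v y i) x + v x i • fderiv ℝ (fun y => G y i) x)) x :=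
    HasFDerivAt.fun_sum fun i _ =>
      (differentiableAt_pi.1 hG i).hasFDerivAt.mul (differentiableAt_pi.1 hv i).hasFDerivAt
  ext l
  rw [gradVec, hderiv.fderiv]
  simp [jacMat, vecMul, dotProduct, Finset.sum_add_distrib]

theorem differentiableAt_gradVec {H' : (Fin d → ℝ) → (Fin d → ℝ) →L[ℝ] ℝ}
    (hH : ∀ᶠ y in 𝓝 x, HasFDerivAt H (H' y) y) (hH' : DifferentiableAt ℝ H' x) :
    DifferentiableAt ℝ (gradVec H) x := by
  have hgrad : gradVec H =ᶠ[𝓝 x] fun y i => H' y (Pi.single i 1) :=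
    hH.mono fun y hy => funext fun i => by rw [gradVec, hy.fderiv]
  refine DifferentiableAt.congr_of_eventuallyEq (differentiableAt_pi.2 fun i => ?_) hgrad
  exact hH'.clm_apply (differentiableAt_const _)

theorem hessMat_mulVec_eq_neg_gradVec_vecMul_jacMat (hG : DifferentiableAt ℝ (gradVec H) x)
    (hv : DifferentiableAt ℝ v x) (horth : ∀ᶠ y in 𝓝 x, gradVec H y ⬝ᵥ v y = 0) :
    hessMat H x *ᵥ v x = -(gradVec H x ᵥ* jacMat v x) := by
  have hzero : gradVec H x ᵥ* jacMat v x + v x ᵥ* jacMat (gradVec H) x = 0 := by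
    rw [← gradVec_dotProduct hG hv, gradVec_eq_zero_of_eventuallyEq_const horth]
  rw [hessMat_eq_transpose_jacMat_gradVec, mulVec_transpose]
  exact eq_neg_of_add_eq_zero_right hzero

theorem dotProduct_hessMat_mulVec_eq_neg (hG : DifferentiableAt ℝ (gradVec H) x)
    (hv : DifferentiableAt ℝ v x) (horth : ∀ᶠ y in 𝓝 x, gradVec H y ⬝ᵥ v y = 0) :
    v x ⬝ᵥ hessMat H x *ᵥ v x = -(gradVec H x ⬝ᵥ jacMat v x *ᵥ v x) := by
  rw [hessMat_mulVec_eq_neg_gradVec_vecMul_jacMat hG hv horth, dotProduct_neg, dotProduct_comm,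
    dotProduct_mulVec]

theorem trace_sigma_sigmaT_hessian_eq_neg_stratonovich_general {ι : Type*} [Fintype ι]
    {H' : (Fin d → ℝ) → (Fin d → ℝ) →L[ℝ] ℝ} {σ : (Fin d → ℝ) → Matrix (Fin d) ι ℝ}
    (hH : ∀ᶠ y in 𝓝 x, HasFDerivAt H (H' y) y) (hH' : DifferentiableAt ℝ H' x)
    (hσ : ∀ i j, DifferentiableAt ℝ (fun y => σ y i j) x)
    (horth : ∀ j, ∀ᶠ y in 𝓝 x, gradVec H y ⬝ᵥ (fun i => σ y i j) = 0) :
    trace (σ x * (σ x)ᵀ * hessMat H x)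
      = -(gradVec H x ⬝ᵥ ∑ j, jacMat (fun y i => σ y i j) x *ᵥ (fun i => σ x i j)) := by
  have hgrad : DifferentiableAt ℝ (gradVec H) x := differentiableAt_gradVec hH hH'
  have hcol (j : ι) : DifferentiableAt ℝ (fun y i => σ y i j) x :=
    differentiableAt_pi.2 fun i => hσ i j
  calc
    trace (σ x * (σ x)ᵀ * hessMat H x)
      = ∑ j, (fun i => σ x i j) ⬝ᵥ hessMat H x *ᵥ (fun i => σ x i j) :=
        trace_mul_mul_eq_sum_dotProduct_mulVec _ _ _
    _ = ∑ j, -(gradVec H x ⬝ᵥ jacMat (fun y i => σ y i j) x *ᵥ (fun i => σ x i j)) :=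
        Finset.sum_congr rfl fun j _ => dotProduct_hessMat_mulVec_eq_neg hgrad (hcol j) (horth j)
    _ = -(gradVec H x ⬝ᵥ ∑ j, jacMat (fun y i => σ y i j) x *ᵥ (fun i => σ x i j)) := by
        rw [Finset.sum_neg_distrib, dotProduct_sum]

end Derivatives

/-- If `H` is `C²`, the entries of `σ : ℝᵈ → ℝ^{d×k}` are `C¹`, and
`⟨∇H(x), σʲ(x)⟩ = 0` for every `x` and every column `j`, then
`tr(σ(x) σ(x)ᵀ D²H(x)) = − ⟨∇H(x), Σⱼ (Dσʲ)(x) σʲ(x)⟩`. -/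
theorem trace_sigma_sigmaT_hessian_eq_neg_stratonovich
    {d k : ℕ} (H : (Fin d → ℝ) → ℝ) (σ : (Fin d → ℝ) → Matrix (Fin d) (Fin k) ℝ)
    (hH : ContDiff ℝ 2 H)
    (hσ : ∀ (i : Fin d) (j : Fin k), ContDiff ℝ 1 (fun x => σ x i j))
    (horth : ∀ (x : Fin d → ℝ) (j : Fin k),
      gradVec H x ⬝ᵥ (fun i => σ x i j) = 0) :
    ∀ x : Fin d → ℝ,
      Matrix.trace (σ x * (σ x)ᵀ * hessMat H x)
        = - (gradVec H x ⬝ᵥ ∑ j : Fin k,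
              (jacMat (fun y i => σ y i j) x) *ᵥ (fun i => σ x i j)) := by
  intro x
  exact trace_sigma_sigmaT_hessian_eq_neg_stratonovich_general
    (.of_forall fun y => (hH.differentiable two_ne_zero y).hasFDerivAt)
    ((hH.fderiv_right one_add_one_eq_two.le).differentiable one_ne_zero x)
    (fun i j => (hσ i j).differentiable one_ne_zero x) (fun j => .of_forall fun y => horth y j)
end

section
/- Let Q ∈ ℝ^{d×d} be symmetric, let J, R, 𝔄̄(j) ∈ ℝ^{d×d} (j = 1,…,k), F, P ∈ ℝ^{d×n}, S, N ∈ ℝ^{n×n} satisfy Jᵀ = −J, Rᵀ = R, Sᵀ = S, Nᵀ = −N, and define A = (J − R − ½ Σ_{j=1}^k 𝔄̄(j)ᵀ Q 𝔄̄(j))Q, B = F − P, 𝔄(j) = 𝔄̄(j)Q for all j, C = (F + P + Σ_{j=1}^k 𝔄̄(j)ᵀ Q 𝔅(j))ᵀ Q, D = S + N + ½ Σ_{j=1}^k 𝔅(j)ᵀ Q 𝔅(j), where 𝔅(j) ∈ ℝ^{d×n} are arbitrary. Then 𝔐_Q = −2 · [[QRQ, QP], [PᵀQ, S]]. -/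
/-!
Write `G(U, V) = ∑ j, (U j)ᵀ Q (V j)`; replacing `𝔄bar` by `𝔄 = 𝔄bar Q` multiplies `G` by `Q` on the
corresponding sides. Each diagonal block sees only the symmetric part of `QA` or `D`: the skew terms
`J` and `N` drop out, and the halves of `G(𝔄bar, 𝔄bar)` and `G(𝔅, 𝔅)` built into `A` and `D` cancel
the Itô corrections. In the upper right block the term `G(𝔄bar, 𝔅)` of `C` cancels the correction
and leaves `Q (F - P) - Q (F + P) = -2 Q P`; the lower left block is its transpose since `Q` is
symmetric. Nothing here is special to real matrices, and with conjugate transposes the same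
computation covers complex systems.
-/

open Matrix

/-- The block matrix `𝔐_Q` associated with the linear stochastic system and the
quadratic Hamiltonian `H(x) = ½⟨Qx, x⟩`. -/
noncomputable def frakM {d n k : ℕ}
    (A : Matrix (Fin d) (Fin d) ℝ) (B : Matrix (Fin d) (Fin n) ℝ)
    (C : Matrix (Fin n) (Fin d) ℝ) (D : Matrix (Fin n) (Fin n) ℝ)
    (𝔄 : Fin k → Matrix (Fin d) (Fin d) ℝ) (𝔅 : Fin k → Matrix (Fin d) (Fin n) ℝ)
    (Q : Matrix (Fin d) (Fin d) ℝ) :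
    Matrix (Fin d ⊕ Fin n) (Fin d ⊕ Fin n) ℝ :=
  Matrix.fromBlocks
    (Q * A + Aᵀ * Q + ∑ j : Fin k, (𝔄 j)ᵀ * Q * 𝔄 j)
    (Q * B - Cᵀ + ∑ j : Fin k, (𝔄 j)ᵀ * Q * 𝔅 j)
    (Bᵀ * Q - C + ∑ j : Fin k, (𝔅 j)ᵀ * Q * 𝔄 j)
    (-(D + Dᵀ) + ∑ j : Fin k, (𝔅 j)ᵀ * Q * 𝔅 j)

section WeightedGram

variable {ι m p q r α : Type*} [Fintype ι] [Fintype m] [NonUnitalSemiring α] [StarRing α]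

/-- The Gram matrix `∑ j, (U j)ᴴ Q (V j)` of two families with respect to the sesquilinear form `Q`;
for the noise coefficients of a linear stochastic system it collects the Itô terms of twice the
drift of the Hamiltonian `½⟨Qx, x⟩`. -/
def weightedGram (Q : Matrix m m α) (U : ι → Matrix m p α) (V : ι → Matrix m q α) :
    Matrix p q α :=
  ∑ j, (U j)ᴴ * Q * V j

variable {Q : Matrix m m α}

theorem conjTranspose_weightedGram (hQ : Q.IsHermitian)
    (U : ι → Matrix m p α) (V : ι → Matrix m q α) :
    (weightedGram Q U V)ᴴ = weightedGram Q V U := by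
  simp only [weightedGram, conjTranspose_sum, conjTranspose_mul, conjTranspose_conjTranspose,
    hQ.eq, Matrix.mul_assoc]

theorem isHermitian_weightedGram_self (hQ : Q.IsHermitian) (U : ι → Matrix m p α) :
    (weightedGram Q U U).IsHermitian :=
  conjTranspose_weightedGram hQ U U

theorem weightedGram_mul_left [Fintype p] (U : ι → Matrix m p α) (T : Matrix p r α)
    (V : ι → Matrix m q α) :
    weightedGram Q (fun j ↦ U j * T) V = Tᴴ * weightedGram Q U V := by
  simp only [weightedGram, conjTranspose_mul, Matrix.mul_sum, Matrix.mul_assoc]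

theorem weightedGram_mul_right [Fintype q] (U : ι → Matrix m p α) (V : ι → Matrix m q α)
    (T : Matrix q r α) :
    weightedGram Q U (fun j ↦ V j * T) = weightedGram Q U V * T := by
  simp only [weightedGram, Matrix.sum_mul, Matrix.mul_assoc]

end WeightedGram

section HermitianPart

variable {m p K : Type*}

theorem conjTranspose_mul_mul_add_conjTranspose [Fintype m] [NonUnitalSemiring K] [StarRing K]
    (Q : Matrix m p K) (M : Matrix m m K) :
    Qᴴ * (M * Q) + (M * Q)ᴴ * Q = Qᴴ * (M + Mᴴ) * Q := by
  simp only [conjTranspose_mul, Matrix.mul_add, Matrix.add_mul, Matrix.mul_assoc]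

variable [CommRing K] [StarRing K] [Invertible (2 : K)]

theorem add_conjTranspose_hermitian_add_skew_add_half {H W G : Matrix m m K}
    (hH : H.IsHermitian) (hW : Wᴴ = -W) (hG : G.IsHermitian) :
    (H + W + (⅟2 : K) • G) + (H + W + (⅟2 : K) • G)ᴴ = (2 : K) • H + G := by
  have half : star (⅟2 : K) = ⅟2 := by simp [star_invOf]
  calc
    (H + W + (⅟2 : K) • G) + (H + W + (⅟2 : K) • G)ᴴ
        = (2 : K) • H + ((⅟2 : K) • G + (⅟2 : K) • G) := by
      simp only [conjTranspose_add, conjTranspose_smul, half, hH.eq, hW, hG.eq]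
      module
    _ = (2 : K) • H + G := by rw [← add_smul, invOf_two_add_invOf_two, one_smul]

end HermitianPart

section PowerBalance

variable {ι m n K : Type*} [Fintype ι] [Fintype m]

/-- The matrix `𝔐_Q` over an arbitrary star ring. Over `ℝ` or `ℂ`, with `H(x) = ½⟨Qx, x⟩`, output
`y = Cx + Du` and generator `L`, its quadratic form in `(x, u)` is `2 (L H - Re ⟨u, y⟩)`. -/
def powerBalanceMatrix [NonUnitalRing K] [StarRing K]
    (A : Matrix m m K) (B : Matrix m n K) (C : Matrix n m K) (D : Matrix n n K)
    (𝔄 : ι → Matrix m m K) (𝔅 : ι → Matrix m n K) (Q : Matrix m m K) :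
    Matrix (m ⊕ n) (m ⊕ n) K :=
  fromBlocks
    (Q * A + Aᴴ * Q + weightedGram Q 𝔄 𝔄)
    (Q * B - Cᴴ + weightedGram Q 𝔄 𝔅)
    (Bᴴ * Q - C + weightedGram Q 𝔅 𝔄)
    (-(D + Dᴴ) + weightedGram Q 𝔅 𝔅)

variable [CommRing K] [StarRing K] {Q J R : Matrix m m K}

theorem powerBalance_state_block [Invertible (2 : K)] (hQ : Q.IsHermitian) (hJ : Jᴴ = -J)
    (hR : R.IsHermitian) (U : ι → Matrix m m K) {A : Matrix m m K}
    (hA : A = (J - R - (⅟2 : K) • weightedGram Q U U) * Q) :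
    Q * A + Aᴴ * Q + weightedGram Q (fun j ↦ U j * Q) (fun j ↦ U j * Q)
      = (-2 : K) • (Q * R * Q) := by
  set G := weightedGram Q U U
  have drift_eq : J - R - (⅟2 : K) • G = -(R + -J + (⅟2 : K) • G) := by abel
  have hermitian_part : (J - R - (⅟2 : K) • G) + (J - R - (⅟2 : K) • G)ᴴ
      = -((2 : K) • R + G) := by
    have hJ_neg : (-J)ᴴ = - -J := by rw [conjTranspose_neg, hJ]
    rw [drift_eq, conjTranspose_neg, ← neg_add,
      add_conjTranspose_hermitian_add_skew_add_half hR hJ_neg (isHermitian_weightedGram_self hQ U)]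
  calc
    Q * A + Aᴴ * Q + weightedGram Q (fun j ↦ U j * Q) (fun j ↦ U j * Q)
        = Q * -((2 : K) • R + G) * Q + Q * G * Q := by
      have congruence := conjTranspose_mul_mul_add_conjTranspose Q (J - R - (⅟2 : K) • G)
      rw [hQ.eq, hermitian_part, ← hA] at congruence
      rw [congruence, weightedGram_mul_left, weightedGram_mul_right, hQ.eq, Matrix.mul_assoc Q G]
    _ = (-2 : K) • (Q * R * Q) := by
      rw [← Matrix.add_mul, ← Matrix.mul_add, neg_add_rev, neg_add_cancel_comm, ← neg_smul,
        Matrix.mul_smul, Matrix.smul_mul]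

theorem powerBalance_state_input_block (hQ : Q.IsHermitian) (F P : Matrix m n K)
    (U : ι → Matrix m m K) (V : ι → Matrix m n K) :
    Q * (F - P) - ((F + P + weightedGram Q U V)ᴴ * Q)ᴴ + weightedGram Q (fun j ↦ U j * Q) V
      = (-2 : K) • (Q * P) := by
  rw [conjTranspose_mul, conjTranspose_conjTranspose, weightedGram_mul_left, hQ.eq]
  simp only [Matrix.mul_sub, Matrix.mul_add]
  module

theorem powerBalance_input_block [Invertible (2 : K)] (hQ : Q.IsHermitian) {S N : Matrix n n K}
    (hS : S.IsHermitian) (hN : Nᴴ = -N) (V : ι → Matrix m n K) {D : Matrix n n K}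
    (hD : D = S + N + (⅟2 : K) • weightedGram Q V V) :
    -(D + Dᴴ) + weightedGram Q V V = (-2 : K) • S := by
  rw [hD, add_conjTranspose_hermitian_add_skew_add_half hS hN (isHermitian_weightedGram_self hQ V)]
  module

theorem frakM_of_SLTIPHS_general [Invertible (2 : K)]
    (𝔄bar : ι → Matrix m m K) (F P : Matrix m n K) {S N : Matrix n n K} (𝔅 : ι → Matrix m n K)
    (hQ : Q.IsHermitian) (hJ : Jᴴ = -J) (hR : R.IsHermitian) (hS : S.IsHermitian)
    (hN : Nᴴ = -N) :
    powerBalanceMatrix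
        ((J - R - (⅟2 : K) • weightedGram Q 𝔄bar 𝔄bar) * Q)
        (F - P)
        ((F + P + weightedGram Q 𝔄bar 𝔅)ᴴ * Q)
        (S + N + (⅟2 : K) • weightedGram Q 𝔅 𝔅)
        (fun j ↦ 𝔄bar j * Q) 𝔅 Q
      = (-2 : K) • fromBlocks (Q * R * Q) (Q * P) (Pᴴ * Q) S := by
  have upper_right := powerBalance_state_input_block hQ F P 𝔄bar 𝔅
  have lower_left : (F - P)ᴴ * Q - (F + P + weightedGram Q 𝔄bar 𝔅)ᴴ * Q
      + weightedGram Q 𝔅 (fun j ↦ 𝔄bar j * Q) = (-2 : K) • (Pᴴ * Q) := by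
    simpa [conjTranspose_weightedGram hQ, hQ.eq] using congrArg conjTranspose upper_right
  rw [powerBalanceMatrix, fromBlocks_smul, powerBalance_state_block hQ hJ hR 𝔄bar rfl, upper_right,
    lower_left, powerBalance_input_block hQ hS hN 𝔅 rfl]

end PowerBalance

/-- For an SLTI-PHS the matrix `𝔐_Q` equals `−2 [[QRQ, QP], [PᵀQ, S]]`. -/
theorem frakM_of_SLTIPHS {d n k : ℕ}
    (Q J R : Matrix (Fin d) (Fin d) ℝ)
    (𝔄bar : Fin k → Matrix (Fin d) (Fin d) ℝ)
    (F P : Matrix (Fin d) (Fin n) ℝ)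
    (S N : Matrix (Fin n) (Fin n) ℝ)
    (𝔅 : Fin k → Matrix (Fin d) (Fin n) ℝ)
    (hQ : Qᵀ = Q) (hJ : Jᵀ = -J) (hR : Rᵀ = R) (hS : Sᵀ = S) (hN : Nᵀ = -N)
    (A : Matrix (Fin d) (Fin d) ℝ)
    (hA : A = (J - R - (1 / 2 : ℝ) • ∑ j : Fin k, (𝔄bar j)ᵀ * Q * 𝔄bar j) * Q)
    (B : Matrix (Fin d) (Fin n) ℝ) (hB : B = F - P)
    (𝔄 : Fin k → Matrix (Fin d) (Fin d) ℝ) (h𝔄 : ∀ j : Fin k, 𝔄 j = 𝔄bar j * Q)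
    (C : Matrix (Fin n) (Fin d) ℝ)
    (hC : C = (F + P + ∑ j : Fin k, (𝔄bar j)ᵀ * Q * 𝔅 j)ᵀ * Q)
    (D : Matrix (Fin n) (Fin n) ℝ)
    (hD : D = S + N + (1 / 2 : ℝ) • ∑ j : Fin k, (𝔅 j)ᵀ * Q * 𝔅 j) :
    frakM A B C D 𝔄 𝔅 Q
      = (-2 : ℝ) • Matrix.fromBlocks (Q * R * Q) (Q * P) (Pᵀ * Q) S := by
  obtain rfl : 𝔄 = fun j ↦ 𝔄bar j * Q := funext h𝔄
  simpa [hA, hB, hC, hD, frakM, powerBalanceMatrix, weightedGram] using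
    frakM_of_SLTIPHS_general 𝔄bar F P 𝔅 hQ hJ hR hS hN
end

section
/- Suppose the matrices A, B, 𝔄(j), 𝔅(j) (j = 1,…,k), C, D form an SLTI-PHS structure with a symmetric positive semidefinite matrix Q ∈ ℝ^{d×d}. Then 𝔐_Q is negative semidefinite, i.e., −𝔐_Q is positive semidefinite. -/
open Matrix

/-! With `G j = [𝔄 j  𝔅 j]` one has `𝔐_Q = V + Vᵀ + ∑ j, (G j)ᵀ Q (G j)`, where
`V = [[QA, QB], [-C, -D]]` is the power balance of the drift and the sum is the Itô correction.
In terms of a port-Hamiltonian representation and `T = diag(Q, 1)`, the Itô correction is `Tᵀ K T`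
and `V = Tᵀ (Z - W - Δ) T`, with `Z = [[J, F], [-Fᵀ, -N]]` skew-symmetric,
`W = [[R, P], [Pᵀ, S]]` and `Δ + Δᵀ = K`. Symmetrizing `V` removes `Z`, the `K` terms cancel, and
`-𝔐_Q = Tᵀ (W + Wᵀ) T` remains. -/

section Blocks

variable {ι m n p q α : Type*}

theorem transpose_fromBlocks_of_skew [AddGroup α] {J : Matrix m m α} {N : Matrix n n α}
    (hJ : Jᵀ = -J) (hN : Nᵀ = -N) (F : Matrix m n α) :
    (fromBlocks J F (-Fᵀ) (-N))ᵀ = -fromBlocks J F (-Fᵀ) (-N) := by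
  simp only [fromBlocks_transpose, fromBlocks_neg, transpose_neg, transpose_transpose, neg_neg,
    hJ, hN]

theorem half_smul_add_transpose [DivisionRing α] [NeZero (2 : α)] {X : Matrix m m α}
    (hX : X.IsSymm) : (1 / 2 : α) • X + ((1 / 2 : α) • X)ᵀ = X := by
  rw [transpose_smul, hX.eq, ← add_smul, add_halves, one_smul]

variable [Fintype p]

theorem transpose_sum_transpose_mul_mul [CommSemiring α] {Q : Matrix p p α} (hQ : Q.IsSymm)
    (s : Finset ι) (G : ι → Matrix p m α) (H : ι → Matrix p n α) :
    (∑ j ∈ s, (G j)ᵀ * Q * H j)ᵀ = ∑ j ∈ s, (H j)ᵀ * Q * G j := by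
  simp only [transpose_sum, transpose_mul, transpose_transpose, hQ.eq, Matrix.mul_assoc]

/-- The power balance of the drift: as a quadratic form in `(x, u)` it is
`⟨Qx, Ax + Bu⟩ - ⟨u, Cx + Du⟩`, the rate of change of `H(x) = ½⟨Qx, x⟩` along `Ax + Bu` minus the
power supplied through the port. It is not symmetrized. -/
def powerBalance [CommRing α] (Q A : Matrix p p α) (B : Matrix p n α)
    (C : Matrix n p α) (D : Matrix n n α) : Matrix (p ⊕ n) (p ⊕ n) α :=
  fromBlocks (Q * A) (Q * B) (-C) (-D)

theorem powerBalance_mul_right [Fintype n] [DecidableEq n] [CommRing α]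
    {Q : Matrix p p α} (hQ : Q.IsSymm) (A : Matrix p p α) (B : Matrix p n α) (C : Matrix n p α)
    (D : Matrix n n α) :
    powerBalance Q (A * Q) B (C * Q) D =
      (fromBlocks Q 0 0 1)ᵀ * fromBlocks A B (-C) (-D) * fromBlocks Q 0 0 1 := by
  simp [powerBalance, fromBlocks_transpose, fromBlocks_multiply, hQ.eq, Matrix.mul_assoc]

variable [Fintype ι]

/-- The Itô correction `∑ j, (G j)ᵀ Q (G j)`, `G j = [𝔄 j  𝔅 j]`, which the noise contributes to
the energy balance: as a quadratic form in `(x, u)` it is twice the second-order term of the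
generator applied to `H(x) = ½⟨Qx, x⟩`. -/
def itoCorrection [CommSemiring α] (Q : Matrix p p α)
    (𝔄 : ι → Matrix p m α) (𝔅 : ι → Matrix p n α) : Matrix (m ⊕ n) (m ⊕ n) α :=
  ∑ j, (fromCols (𝔄 j) (𝔅 j))ᵀ * Q * fromCols (𝔄 j) (𝔅 j)

theorem itoCorrection_eq_fromBlocks [CommSemiring α] (Q : Matrix p p α)
    (𝔄 : ι → Matrix p m α) (𝔅 : ι → Matrix p n α) :
    itoCorrection Q 𝔄 𝔅 =
      fromBlocks (∑ j, (𝔄 j)ᵀ * Q * 𝔄 j) (∑ j, (𝔄 j)ᵀ * Q * 𝔅 j)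
        (∑ j, (𝔅 j)ᵀ * Q * 𝔄 j) (∑ j, (𝔅 j)ᵀ * Q * 𝔅 j) := by
  simp only [itoCorrection, transpose_fromCols, fromRows_mul]
  ext (i | i) (j | j) <;> simp [Matrix.sum_apply]

theorem itoCorrection_mul_right [Fintype n] [Fintype q] [DecidableEq n] [CommSemiring α]
    (Q : Matrix p p α) (𝔄 : ι → Matrix p q α) (𝔅 : ι → Matrix p n α)
    (L : Matrix q m α) :
    itoCorrection Q (fun j => 𝔄 j * L) 𝔅 =
      (fromBlocks L 0 0 (1 : Matrix n n α))ᵀ * itoCorrection Q 𝔄 𝔅 *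
        fromBlocks L 0 0 (1 : Matrix n n α) := by
  have hG (j : ι) : fromCols (𝔄 j * L) (𝔅 j) =
      fromCols (𝔄 j) (𝔅 j) * fromBlocks L 0 0 (1 : Matrix n n α) := by
    simp only [fromCols_mul_fromBlocks, Matrix.mul_zero, Matrix.mul_one, add_zero, zero_add]
  simp only [itoCorrection, hG, transpose_mul, Matrix.mul_sum, Matrix.sum_mul, Matrix.mul_assoc]

/-- A matrix whose sum with its transpose is the Itô correction. Its off-diagonal part sits
entirely in the lower left block because, in a port-Hamiltonian representation, `C` carries a
correction term and `B` does not. -/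
def halfItoCorrection [Field α] (Q : Matrix p p α)
    (𝔄 : ι → Matrix p m α) (𝔅 : ι → Matrix p n α) : Matrix (m ⊕ n) (m ⊕ n) α :=
  fromBlocks ((1 / 2 : α) • ∑ j, (𝔄 j)ᵀ * Q * 𝔄 j) 0
    (∑ j, (𝔄 j)ᵀ * Q * 𝔅 j)ᵀ ((1 / 2 : α) • ∑ j, (𝔅 j)ᵀ * Q * 𝔅 j)

theorem halfItoCorrection_add_transpose [Field α] [NeZero (2 : α)] {Q : Matrix p p α}
    (hQ : Q.IsSymm) (𝔄 : ι → Matrix p m α) (𝔅 : ι → Matrix p n α) :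
    halfItoCorrection Q 𝔄 𝔅 + (halfItoCorrection Q 𝔄 𝔅)ᵀ = itoCorrection Q 𝔄 𝔅 := by
  rw [halfItoCorrection, itoCorrection_eq_fromBlocks, fromBlocks_transpose, fromBlocks_add,
    half_smul_add_transpose (transpose_sum_transpose_mul_mul hQ _ 𝔄 𝔄),
    half_smul_add_transpose (transpose_sum_transpose_mul_mul hQ _ 𝔅 𝔅),
    transpose_transpose, transpose_zero, zero_add, add_zero,
    transpose_sum_transpose_mul_mul hQ _ 𝔄 𝔅]

theorem symmetrization_skew_sub_sub_add_itoCorrection [Field α] [NeZero (2 : α)]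
    {Q : Matrix p p α} (hQ : Q.IsSymm) {Z : Matrix (m ⊕ n) (m ⊕ n) α} (hZ : Zᵀ = -Z)
    (W : Matrix (m ⊕ n) (m ⊕ n) α) (𝔄 : ι → Matrix p m α) (𝔅 : ι → Matrix p n α) :
    (Z - W - halfItoCorrection Q 𝔄 𝔅) + (Z - W - halfItoCorrection Q 𝔄 𝔅)ᵀ +
      itoCorrection Q 𝔄 𝔅 = -(W + Wᵀ) := by
  rw [← halfItoCorrection_add_transpose hQ, transpose_sub, transpose_sub, hZ]
  abel

theorem fromBlocks_eq_skew_sub_dissipation_sub_halfItoCorrection [Field α] (Q : Matrix p p α)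
    (J R : Matrix m m α) (F P : Matrix m n α) (S N : Matrix n n α)
    (𝔄 : ι → Matrix p m α) (𝔅 : ι → Matrix p n α) :
    fromBlocks (J - R - (1 / 2 : α) • ∑ j, (𝔄 j)ᵀ * Q * 𝔄 j) (F - P)
        (-(F + P + ∑ j, (𝔄 j)ᵀ * Q * 𝔅 j)ᵀ)
        (-(S + N + (1 / 2 : α) • ∑ j, (𝔅 j)ᵀ * Q * 𝔅 j)) =
      fromBlocks J F (-Fᵀ) (-N) - fromBlocks R P Pᵀ S - halfItoCorrection Q 𝔄 𝔅 := by
  simp only [halfItoCorrection, sub_eq_add_neg, fromBlocks_neg, fromBlocks_add, transpose_add]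
  congr 1 <;> abel

end Blocks

section FrakM

variable {d n k : ℕ} {Q : Matrix (Fin d) (Fin d) ℝ}

theorem frakM_eq_powerBalance_add_transpose_add_itoCorrection (hQ : Q.IsSymm)
    (A : Matrix (Fin d) (Fin d) ℝ) (B : Matrix (Fin d) (Fin n) ℝ)
    (C : Matrix (Fin n) (Fin d) ℝ) (D : Matrix (Fin n) (Fin n) ℝ)
    (𝔄 : Fin k → Matrix (Fin d) (Fin d) ℝ) (𝔅 : Fin k → Matrix (Fin d) (Fin n) ℝ) :
    frakM A B C D 𝔄 𝔅 Q =
      powerBalance Q A B C D + (powerBalance Q A B C D)ᵀ + itoCorrection Q 𝔄 𝔅 := by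
  simp only [frakM, powerBalance, itoCorrection_eq_fromBlocks, fromBlocks_transpose,
    fromBlocks_add, transpose_mul, transpose_neg, hQ.eq]
  congr 2 <;> abel

theorem neg_frakM_eq_transpose_mul_mul (hQ : Q.IsSymm) {J : Matrix (Fin d) (Fin d) ℝ}
    {N : Matrix (Fin n) (Fin n) ℝ} (hJ : Jᵀ = -J) (hN : Nᵀ = -N)
    (R : Matrix (Fin d) (Fin d) ℝ) (F P : Matrix (Fin d) (Fin n) ℝ)
    (S : Matrix (Fin n) (Fin n) ℝ) (𝔄bar : Fin k → Matrix (Fin d) (Fin d) ℝ)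
    (𝔅 : Fin k → Matrix (Fin d) (Fin n) ℝ) :
    -frakM ((J - R - (1 / 2 : ℝ) • ∑ j, (𝔄bar j)ᵀ * Q * 𝔄bar j) * Q) (F - P)
        ((F + P + ∑ j, (𝔄bar j)ᵀ * Q * 𝔅 j)ᵀ * Q)
        (S + N + (1 / 2 : ℝ) • ∑ j, (𝔅 j)ᵀ * Q * 𝔅 j) (fun j => 𝔄bar j * Q) 𝔅 Q =
      (fromBlocks Q 0 0 1)ᵀ * (fromBlocks R P Pᵀ S + (fromBlocks R P Pᵀ S)ᵀ) *
        fromBlocks Q 0 0 1 := by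
  rw [frakM_eq_powerBalance_add_transpose_add_itoCorrection hQ, powerBalance_mul_right hQ,
    itoCorrection_mul_right, fromBlocks_eq_skew_sub_dissipation_sub_halfItoCorrection,
    transpose_mul, transpose_mul, transpose_transpose, ← Matrix.mul_assoc, ← Matrix.add_mul,
    ← Matrix.add_mul, ← Matrix.mul_add, ← Matrix.mul_add,
    symmetrization_skew_sub_sub_add_itoCorrection hQ (transpose_fromBlocks_of_skew hJ hN F),
    Matrix.mul_neg, Matrix.neg_mul, neg_neg]

theorem frakM_negSemidef_of_SLTIPHS_general
    {A J R : Matrix (Fin d) (Fin d) ℝ} {B F P : Matrix (Fin d) (Fin n) ℝ}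
    {𝔄 𝔄bar : Fin k → Matrix (Fin d) (Fin d) ℝ} {𝔅 : Fin k → Matrix (Fin d) (Fin n) ℝ}
    {C : Matrix (Fin n) (Fin d) ℝ} {D S N : Matrix (Fin n) (Fin n) ℝ}
    (hQ : Q.IsSymm) (hJ : Jᵀ = -J) (hN : Nᵀ = -N)
    (hW : (fromBlocks R P Pᵀ S).PosSemidef)
    (hA : A = (J - R - (1 / 2 : ℝ) • ∑ j, (𝔄bar j)ᵀ * Q * 𝔄bar j) * Q)
    (hB : B = F - P)
    (h𝔄 : ∀ j, 𝔄 j = 𝔄bar j * Q)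
    (hC : C = (F + P + ∑ j, (𝔄bar j)ᵀ * Q * 𝔅 j)ᵀ * Q)
    (hD : D = S + N + (1 / 2 : ℝ) • ∑ j, (𝔅 j)ᵀ * Q * 𝔅 j) :
    (-frakM A B C D 𝔄 𝔅 Q).PosSemidef := by
  obtain rfl : 𝔄 = fun j => 𝔄bar j * Q := funext h𝔄
  rw [hA, hB, hC, hD, neg_frakM_eq_transpose_mul_mul hQ hJ hN,
    ← conjTranspose_eq_transpose_of_trivial (fromBlocks Q 0 0 1)]
  exact (hW.add hW.transpose).conjTranspose_mul_mul_same _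

end FrakM

/-- If the system matrices form an SLTI-PHS structure with a positive semidefinite `Q`,
then `𝔐_Q` is negative semidefinite. -/
theorem frakM_negSemidef_of_SLTIPHS {d n k : ℕ}
    (A : Matrix (Fin d) (Fin d) ℝ) (B : Matrix (Fin d) (Fin n) ℝ)
    (𝔄 : Fin k → Matrix (Fin d) (Fin d) ℝ) (𝔅 : Fin k → Matrix (Fin d) (Fin n) ℝ)
    (C : Matrix (Fin n) (Fin d) ℝ) (D : Matrix (Fin n) (Fin n) ℝ)
    (Q : Matrix (Fin d) (Fin d) ℝ) (hQ : Q.PosSemidef)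
    (hPHS : ∃ (J R : Matrix (Fin d) (Fin d) ℝ)
        (𝔄bar : Fin k → Matrix (Fin d) (Fin d) ℝ)
        (F P : Matrix (Fin d) (Fin n) ℝ)
        (S N : Matrix (Fin n) (Fin n) ℝ),
      Jᵀ = -J ∧ Rᵀ = R ∧ Sᵀ = S ∧ Nᵀ = -N ∧
      (Matrix.fromBlocks R P Pᵀ S).PosSemidef ∧
      A = (J - R - (1 / 2 : ℝ) • ∑ j : Fin k, (𝔄bar j)ᵀ * Q * 𝔄bar j) * Q ∧
      B = F - P ∧
      (∀ j : Fin k, 𝔄 j = 𝔄bar j * Q) ∧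
      C = (F + P + ∑ j : Fin k, (𝔄bar j)ᵀ * Q * 𝔅 j)ᵀ * Q ∧
      D = S + N + (1 / 2 : ℝ) • ∑ j : Fin k, (𝔅 j)ᵀ * Q * 𝔅 j) :
    (-(frakM A B C D 𝔄 𝔅 Q)).PosSemidef := by
  obtain ⟨J, R, 𝔄bar, F, P, S, N, hJ, -, -, hN, hW, hA, hB, h𝔄, hC, hD⟩ := hPHS
  exact frakM_negSemidef_of_SLTIPHS_general (isHermitian_iff_isSymm.mp hQ.isHermitian)
    hJ hN hW hA hB h𝔄 hC hD
end

section
/- Let A ∈ ℝ^{d×d}, B ∈ ℝ^{d×n}, 𝔄(j) ∈ ℝ^{d×d}, 𝔅(j) ∈ ℝ^{d×n} (j = 1,…,k), C ∈ ℝ^{n×d}, D ∈ ℝ^{n×n}, and let Q ∈ ℝ^{d×d} be symmetric positive semidefinite. Assume that ker(Q) ⊆ ker(A), ker(Q) ⊆ ker(C), and ker(Q) ⊆ ker(𝔄(j)) for all j = 1,…,k, and that 𝔐_Q is negative semidefinite. Then A, B, 𝔄(j), 𝔅(j) (j = 1,…,k), C, D form an SLTI-PHS structure with matrix Q, i.e.,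 there exist J, R, 𝔄̄(j) ∈ ℝ^{d×d} (j = 1,…,k), F, P ∈ ℝ^{d×n}, S, N ∈ ℝ^{n×n} with Jᵀ = −J, Rᵀ = R, Sᵀ = S, Nᵀ = −N, the block matrix [[R, P], [Pᵀ, S]] positive semidefinite, and A = (J − R − ½ Σ_{j=1}^k 𝔄̄(j)ᵀ Q 𝔄̄(j))Q, B = F − P, 𝔄(j) = 𝔄̄(j)Q for all j, C = (F + P + Σ_{j=1}^k 𝔄̄(j)ᵀ Q 𝔅(j))ᵀ Q, D = S + N + ½ Σ_{j=1}^k 𝔅(j)ᵀ Q 𝔅(j). -/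
open Matrix

/-!
Let `X` be a Hermitian generalized inverse of `Q`, i.e. `Q * X * Q = Q`. The kernel inclusions say
precisely that `A`, `C` and the `𝔄 j` factor through `Q` on the right, with factors `A * X`, `C * X`
and `𝔄 j * X`. These factors are only determined up to matrices vanishing on the range of `Q`, and
the first two can be corrected by such matrices so that compressing `𝔐_Q` by `diag(X, 1)` yields
`-2 • [[R, P], [Pᴴ, S]]`. The compression preserves the sign, and `J`, `N` are the skew-Hermitian
parts of the remaining data.
-/

theorem exists_linearMap_comp_comp_eq_self {K V W : Type*} [DivisionRing K]
    [AddCommGroup V] [Module K V] [AddCommGroup W] [Module K W] (f : V →ₗ[K] W) :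
    ∃ g : W →ₗ[K] V, f ∘ₗ g ∘ₗ f = f := by
  obtain ⟨s, hs⟩ := f.rangeRestrict.exists_rightInverse_of_surjective f.range_rangeRestrict
  obtain ⟨g, hg⟩ := s.exists_extend
  refine ⟨g, LinearMap.ext fun x => ?_⟩
  have hgs : g (f x) = s (f.rangeRestrict x) := LinearMap.congr_fun hg (f.rangeRestrict x)
  have hsx : f.rangeRestrict (s (f.rangeRestrict x)) = f.rangeRestrict x :=
    LinearMap.congr_fun hs (f.rangeRestrict x)
  simpa only [LinearMap.comp_apply, hgs] using! congrArg Subtype.val hsx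

theorem exists_matrix_mul_mul_eq_self {K m n : Type*} [Field K] [Fintype m] [Fintype n]
    (M : Matrix m n K) : ∃ X : Matrix n m K, M * X * M = M := by
  classical
  obtain ⟨g, hg⟩ := exists_linearMap_comp_comp_eq_self (toLin' M)
  refine ⟨LinearMap.toMatrix' g, toLin'.injective ?_⟩
  rw [toLin'_mul, toLin'_mul, toLin'_toMatrix', LinearMap.comp_assoc, hg]

theorem exists_isHermitian_mul_mul_eq_self {K m : Type*} [Field K] [StarRing K] [Fintype m]
    {Q : Matrix m m K} (hQ : Q.IsHermitian) :
    ∃ X : Matrix m m K, X.IsHermitian ∧ Q * X * Q = Q := by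
  obtain ⟨Y, hY⟩ := exists_matrix_mul_mul_eq_self Q
  have hYstar : Q * Yᴴ * Q = Q := by
    simpa only [conjTranspose_mul, hQ.eq, Matrix.mul_assoc] using congrArg conjTranspose hY
  refine ⟨Y * Q * Yᴴ, isHermitian_mul_mul_conjTranspose Y hQ, ?_⟩
  calc Q * (Y * Q * Yᴴ) * Q = Q * Y * Q * Yᴴ * Q := by simp only [Matrix.mul_assoc]
    _ = Q := by rw [hY, hYstar]

theorem mul_mul_eq_self_of_ker_le {R l m n : Type*} [Ring R] [Fintype l] [Fintype m]
    {Q : Matrix l m R} {X : Matrix m l R} {G : Matrix n m R} (hX : Q * X * Q = Q)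
    (hG : ∀ x : m → R, Q *ᵥ x = 0 → G *ᵥ x = 0) : G * X * Q = G := by
  refine ext_iff_mulVec.mpr fun x => ?_
  have hQ : Q *ᵥ ((X * Q) *ᵥ x - x) = 0 := by
    rw [mulVec_sub, mulVec_mulVec, ← Matrix.mul_assoc, hX, sub_self]
  simpa only [mulVec_sub, mulVec_mulVec, ← Matrix.mul_assoc, sub_eq_zero] using hG _ hQ

theorem conjTranspose_half_smul_sub_conjTranspose {K m : Type*} [Field K] [StarRing K]
    (M : Matrix m m K) : ((1 / 2 : K) • (M - Mᴴ))ᴴ = -((1 / 2 : K) • (M - Mᴴ)) := by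
  have star_half : star (1 / 2 : K) = 1 / 2 := by
    rw [star_div₀, star_one, star_ofNat]
  rw [conjTranspose_smul, star_half, conjTranspose_sub, conjTranspose_conjTranspose, ← smul_neg,
    neg_sub]

theorem fromBlocks_diagonal_mul_mul_conjTranspose {R l m n o : Type*} [Ring R] [StarRing R]
    [Fintype m] [Fintype n] (X : Matrix l m R) (Y : Matrix o n R) (M₁₁ : Matrix m m R)
    (M₁₂ : Matrix m n R) (M₂₁ : Matrix n m R) (M₂₂ : Matrix n n R) :
    fromBlocks X 0 0 Y * fromBlocks M₁₁ M₁₂ M₂₁ M₂₂ * (fromBlocks X 0 0 Y)ᴴ =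
      fromBlocks (X * M₁₁ * Xᴴ) (X * M₁₂ * Yᴴ) (Y * M₂₁ * Xᴴ) (Y * M₂₂ * Yᴴ) := by
  simp only [fromBlocks_conjTranspose, fromBlocks_multiply, conjTranspose_zero, Matrix.mul_zero,
    Matrix.zero_mul, add_zero, zero_add]

section PortHamiltonian

variable {R K d n k : Type*} [Fintype d] [Fintype k]

/-- The block matrix `𝔐_Q` with two weights: `V` multiplies the drift `(A, B)` and `Q` the noise
`(𝔄, 𝔅)`. For `V = Q` it is `𝔐_Q` itself; for `V = 1`, applied to right factors of `A`, `𝔄`, `C`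
through `Q`, it is `-2 • [[R, P], [Pᴴ, S]]`. -/
def portMatrix [Ring R] [StarRing R] (V Q : Matrix d d R)
    (A : Matrix d d R) (B : Matrix d n R) (𝔄 : k → Matrix d d R) (𝔅 : k → Matrix d n R)
    (C : Matrix n d R) (D : Matrix n n R) : Matrix (d ⊕ n) (d ⊕ n) R :=
  fromBlocks
    (V * A + Aᴴ * V + ∑ j, (𝔄 j)ᴴ * Q * 𝔄 j)
    (V * B - Cᴴ + ∑ j, (𝔄 j)ᴴ * Q * 𝔅 j)
    (Bᴴ * V - C + ∑ j, (𝔅 j)ᴴ * Q * 𝔄 j)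
    (-(D + Dᴴ) + ∑ j, (𝔅 j)ᴴ * Q * 𝔅 j)

/-- The coefficients form an SLTI-PHS structure with matrix `Q`: the definition of a linear
stochastic port-Hamiltonian system, over an arbitrary field with involution and with adjoints in
place of transposes. -/
def IsSLTIPHS [Field K] [PartialOrder K] [StarRing K]
    (A : Matrix d d K) (B : Matrix d n K) (𝔄 : k → Matrix d d K) (𝔅 : k → Matrix d n K)
    (C : Matrix n d K) (D : Matrix n n K) (Q : Matrix d d K) : Prop :=
  ∃ (J R : Matrix d d K) (𝔄bar : k → Matrix d d K) (F P : Matrix d n K) (S N : Matrix n n K),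
    Jᴴ = -J ∧ Rᴴ = R ∧ Sᴴ = S ∧ Nᴴ = -N ∧
    (fromBlocks R P Pᴴ S).PosSemidef ∧
    A = (J - R - (1 / 2 : K) • ∑ j, (𝔄bar j)ᴴ * Q * 𝔄bar j) * Q ∧
    B = F - P ∧
    (∀ j, 𝔄 j = 𝔄bar j * Q) ∧
    C = (F + P + ∑ j, (𝔄bar j)ᴴ * Q * 𝔅 j)ᴴ * Q ∧
    D = S + N + (1 / 2 : K) • ∑ j, (𝔅 j)ᴴ * Q * 𝔅 j

theorem isSLTIPHS_of_factorization [Field K] [PartialOrder K] [StarRing K] [StarOrderedRing K]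
    [DecidableEq d] {A T Q : Matrix d d K} {B G : Matrix d n K} {𝔄 H : k → Matrix d d K}
    {𝔅 : k → Matrix d n K} {C : Matrix n d K} {D : Matrix n n K}
    (hA : A = T * Q) (h𝔄 : ∀ j, 𝔄 j = H j * Q) (hC : C = Gᴴ * Q)
    (hM : (-portMatrix 1 Q T B H 𝔅 Gᴴ D).PosSemidef) : IsSLTIPHS A B 𝔄 𝔅 C D Q := by
  have half_nonneg : (0 : K) ≤ 1 / 2 := by
    simpa using star_left_conjugate_nonneg zero_le_two (1 / 2 : K)
  have hW := hM.smul half_nonneg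
  simp only [portMatrix, fromBlocks_neg, fromBlocks_smul, Matrix.one_mul, Matrix.mul_one,
    conjTranspose_conjTranspose] at hW
  obtain ⟨hR, hP, -, hS⟩ := isHermitian_fromBlocks_iff.mp hW.isHermitian
  rw [← hP] at hW
  refine ⟨(1 / 2 : K) • (T - Tᴴ), _, H, _, _, _, (1 / 2 : K) • (D - Dᴴ),
    conjTranspose_half_smul_sub_conjTranspose T, hR, hS,
    conjTranspose_half_smul_sub_conjTranspose D, hW, ?_, (add_sub_cancel_right B _).symm, h𝔄,
    ?_, ?_⟩
  · rw [hA]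
    congr 1
    module
  · rw [hC]
    congr 2
    module
  · module

-- The corrections `X * Aᴴ * (1 - Q * X)` and `((1 - X * Q) * B)ᴴ` vanish when multiplied by `Q`
-- if `Q * X * Q = Q`. The first gives the factor of `A` the Hermitian part
-- `(1 / 2) • X * (Q * A + Aᴴ * Q) * X`, the second turns `B - X * Cᴴ` into `X * (Q * B - Cᴴ)`.
theorem fromBlocks_mul_portMatrix_mul_conjTranspose [Ring R] [StarRing R] [Fintype n]
    [DecidableEq d] [DecidableEq n] {X Q : Matrix d d R} (hX : X.IsHermitian)
    (hQ : Q.IsHermitian) (A : Matrix d d R) (B : Matrix d n R) (𝔄 : k → Matrix d d R)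
    (𝔅 : k → Matrix d n R) (C : Matrix n d R) (D : Matrix n n R) :
    fromBlocks X 0 0 1 * portMatrix Q Q A B 𝔄 𝔅 C D * (fromBlocks X 0 0 1)ᴴ =
      portMatrix 1 Q (A * X - X * Aᴴ * (1 - Q * X)) B (fun j => 𝔄 j * X) 𝔅
        (X * Cᴴ + (1 - X * Q) * B)ᴴ D := by
  rw [portMatrix, portMatrix, fromBlocks_diagonal_mul_mul_conjTranspose, fromBlocks_inj]
  simp only [conjTranspose_add, conjTranspose_sub, conjTranspose_mul, conjTranspose_conjTranspose,
    conjTranspose_one, hX.eq, hQ.eq, Matrix.mul_one, Matrix.one_mul, Matrix.mul_add,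
    Matrix.add_mul, Matrix.mul_sub, Matrix.sub_mul, Matrix.mul_sum, Matrix.sum_mul,
    Matrix.mul_assoc, and_true]
  refine ⟨?_, ?_, ?_⟩ <;> abel

theorem SLTIPHS_of_kernel_cond_and_negSemidef_general [Field K] [PartialOrder K] [StarRing K]
    [StarOrderedRing K] [Finite n] (A : Matrix d d K) (B : Matrix d n K)
    (𝔄 : k → Matrix d d K) (𝔅 : k → Matrix d n K) (C : Matrix n d K) (D : Matrix n n K)
    (Q : Matrix d d K) (hQ : Q.IsHermitian)
    (hkerA : ∀ x : d → K, Q *ᵥ x = 0 → A *ᵥ x = 0)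
    (hkerC : ∀ x : d → K, Q *ᵥ x = 0 → C *ᵥ x = 0)
    (hker𝔄 : ∀ (j : k) (x : d → K), Q *ᵥ x = 0 → 𝔄 j *ᵥ x = 0)
    (hM : (-portMatrix Q Q A B 𝔄 𝔅 C D).PosSemidef) : IsSLTIPHS A B 𝔄 𝔅 C D Q := by
  classical
  cases nonempty_fintype n
  obtain ⟨X, hXherm, hX⟩ := exists_isHermitian_mul_mul_eq_self hQ
  have hA : A * X * Q = A := mul_mul_eq_self_of_ker_le hX hkerA
  have hC : C * X * Q = C := mul_mul_eq_self_of_ker_le hX hkerC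
  have h𝔄 (j : k) : 𝔄 j * X * Q = 𝔄 j := mul_mul_eq_self_of_ker_le hX (hker𝔄 j)
  have hcorr : (1 - Q * X) * Q = 0 := by
    rw [Matrix.sub_mul, Matrix.one_mul, hX, sub_self]
  refine isSLTIPHS_of_factorization (T := A * X - X * Aᴴ * (1 - Q * X))
    (G := X * Cᴴ + (1 - X * Q) * B) ?_ (fun j => (h𝔄 j).symm) ?_ ?_
  · rw [Matrix.sub_mul, hA, Matrix.mul_assoc _ _ Q, hcorr, Matrix.mul_zero, sub_zero]
  · simp only [conjTranspose_add, conjTranspose_mul, conjTranspose_sub, conjTranspose_one,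
      conjTranspose_conjTranspose, hXherm.eq, hQ.eq]
    rw [Matrix.add_mul, hC, Matrix.mul_assoc _ _ Q, hcorr, Matrix.mul_zero, add_zero]
  · simpa only [Matrix.mul_neg, Matrix.neg_mul,
      fromBlocks_mul_portMatrix_mul_conjTranspose hXherm hQ] using
      hM.mul_mul_conjTranspose_same (fromBlocks X 0 0 (1 : Matrix n n K))

end PortHamiltonian

/-- If `Q` is positive semidefinite, `ker(Q)` is contained in the kernels of `A`, `C`
and all `𝔄(j)`, and `𝔐_Q ≤ 0`, then the system is an SLTI-PHS with `Q`. -/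
theorem SLTIPHS_of_kernel_cond_and_negSemidef {d n k : ℕ}
    (A : Matrix (Fin d) (Fin d) ℝ) (B : Matrix (Fin d) (Fin n) ℝ)
    (𝔄 : Fin k → Matrix (Fin d) (Fin d) ℝ) (𝔅 : Fin k → Matrix (Fin d) (Fin n) ℝ)
    (C : Matrix (Fin n) (Fin d) ℝ) (D : Matrix (Fin n) (Fin n) ℝ)
    (Q : Matrix (Fin d) (Fin d) ℝ) (hQ : Q.PosSemidef)
    (hkerA : ∀ x : Fin d → ℝ, Q *ᵥ x = 0 → A *ᵥ x = 0)
    (hkerC : ∀ x : Fin d → ℝ, Q *ᵥ x = 0 → C *ᵥ x = 0)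
    (hker𝔄 : ∀ (j : Fin k) (x : Fin d → ℝ), Q *ᵥ x = 0 → 𝔄 j *ᵥ x = 0)
    (hM : (-(frakM A B C D 𝔄 𝔅 Q)).PosSemidef) :
    ∃ (J R : Matrix (Fin d) (Fin d) ℝ)
      (𝔄bar : Fin k → Matrix (Fin d) (Fin d) ℝ)
      (F P : Matrix (Fin d) (Fin n) ℝ)
      (S N : Matrix (Fin n) (Fin n) ℝ),
      Jᵀ = -J ∧ Rᵀ = R ∧ Sᵀ = S ∧ Nᵀ = -N ∧
      (Matrix.fromBlocks R P Pᵀ S).PosSemidef ∧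
      A = (J - R - (1 / 2 : ℝ) • ∑ j : Fin k, (𝔄bar j)ᵀ * Q * 𝔄bar j) * Q ∧
      B = F - P ∧
      (∀ j : Fin k, 𝔄 j = 𝔄bar j * Q) ∧
      C = (F + P + ∑ j : Fin k, (𝔄bar j)ᵀ * Q * 𝔅 j)ᵀ * Q ∧
      D = S + N + (1 / 2 : ℝ) • ∑ j : Fin k, (𝔅 j)ᵀ * Q * 𝔅 j := by
  simpa only [IsSLTIPHS, conjTranspose_eq_transpose_of_trivial] using
    SLTIPHS_of_kernel_cond_and_negSemidef_general A B 𝔄 𝔅 C D Q hQ.isHermitian hkerA hkerC hker𝔄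
      (by simpa only [portMatrix, conjTranspose_eq_transpose_of_trivial] using! hM)
end

section
/- Let K ∈ ℝ^{m×m} be skew-symmetric (Kᵀ = −K) and let D ∈ ℝ^{m×m} be symmetric positive semidefinite. Then the matrix Id − K·D is invertible. -/
open Matrix

/-!
If `K D x = x`, put `y = D x`. Then `x⋆ D x = (K y)⋆ y` is the conjugate of `y⋆ K y`. The left-hand
side is nonnegative since `D ≥ 0`, while `y⋆ K y` has nonpositive real part if `K + K⋆ ≤ 0`, for
instance if `K` is skew-adjoint. So `x⋆ D x = 0`, which for positive semidefinite `D` forces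
`D x = 0`, and hence `x = K D x = 0`.
-/

section StarRing

variable {n R : Type*} [Fintype n] [NonUnitalRing R] [StarRing R]

theorem star_dotProduct_mulVec_mem_skewAdjoint {K : Matrix n n R} (hK : Kᴴ = -K) (y : n → R) :
    star y ⬝ᵥ K *ᵥ y ∈ skewAdjoint R := by
  rw [skewAdjoint.mem_iff]
  calc star (star y ⬝ᵥ K *ᵥ y) = star (K *ᵥ y) ⬝ᵥ y := (star_dotProduct _ _).symm
    _ = star y ⬝ᵥ Kᴴ *ᵥ y := by rw [star_mulVec, dotProduct_mulVec]
    _ = -(star y ⬝ᵥ K *ᵥ y) := by rw [hK, neg_mulVec, dotProduct_neg]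

end StarRing

section RCLike

open scoped ComplexOrder

variable {n 𝕜 : Type*} [Fintype n] [RCLike 𝕜] {K D : Matrix n n 𝕜} {x : n → 𝕜}

theorem re_eq_zero_of_mem_skewAdjoint {z : 𝕜} (hz : z ∈ skewAdjoint 𝕜) : RCLike.re z = 0 := by
  have h : RCLike.re z = -RCLike.re z := by
    simpa using congrArg RCLike.re (skewAdjoint.mem_iff.mp hz)
  linarith

theorem mulVec_eq_zero_of_re_star_dotProduct_mulVec_nonpos (hD : D.PosSemidef)
    (hx : RCLike.re (star x ⬝ᵥ D *ᵥ x) ≤ 0) : D *ᵥ x = 0 := by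
  obtain ⟨hre, him⟩ := RCLike.nonneg_iff.mp (hD.dotProduct_mulVec_nonneg x)
  exact (hD.dotProduct_mulVec_zero_iff x).mp
    (RCLike.ext (by simpa using le_antisymm hx hre) (by simpa using him))

theorem eq_zero_of_mulVec_mulVec_eq_self
    (hK : ∀ y : n → 𝕜, RCLike.re (star y ⬝ᵥ K *ᵥ y) ≤ 0) (hD : D.PosSemidef)
    (hx : K *ᵥ D *ᵥ x = x) : x = 0 := by
  have quadratic_forms_conj : star x ⬝ᵥ D *ᵥ x = star (star (D *ᵥ x) ⬝ᵥ K *ᵥ D *ᵥ x) := by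
    rw [hx, star_dotProduct]
  have hDx : D *ᵥ x = 0 := by
    refine mulVec_eq_zero_of_re_star_dotProduct_mulVec_nonpos hD ?_
    rw [quadratic_forms_conj, RCLike.star_def, RCLike.conj_re]
    exact hK (D *ᵥ x)
  rw [← hx, hDx, mulVec_zero]

theorem isUnit_one_sub_skew_mul_posSemidef_general [DecidableEq n]
    (hK : ∀ y : n → 𝕜, RCLike.re (star y ⬝ᵥ K *ᵥ y) ≤ 0) (hD : D.PosSemidef) :
    IsUnit (1 - K * D) := by
  rw [← mulVec_injective_iff_isUnit, ← coe_mulVecLin, injective_iff_map_eq_zero]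
  intro x hx
  rw [mulVecLin_apply, sub_mulVec, one_mulVec, ← mulVec_mulVec, sub_eq_zero] at hx
  exact eq_zero_of_mulVec_mulVec_eq_self hK hD hx.symm

end RCLike

/-- If `K` is skew-symmetric and `D` is symmetric positive semidefinite, then
`Id − K·D` is invertible. -/
theorem isUnit_one_sub_skew_mul_posSemidef {m : ℕ}
    (K D : Matrix (Fin m) (Fin m) ℝ)
    (hK : Kᵀ = -K) (hD : D.PosSemidef) :
    IsUnit (1 - K * D) :=
  isUnit_one_sub_skew_mul_posSemidef_general (fun y ↦
    (re_eq_zero_of_mem_skewAdjoint (star_dotProduct_mulVec_mem_skewAdjoint hK y)).le) hD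
end
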